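/- For every integer a: ψ(ω^a R_1) = 2^{2s} − 1 if a ≡ 0 (mod M), and ψ(ω^a R_1) = −1 otherwise; ψ(ω^a R_2) = −2^{s−1}(2^s + 1) if a ≡ 0 (mod M), ψ(ω^a R_2) = 2^{s−1}(2^s − 1) if −a mod M ∈ T_1, and ψ(ω^a R_2) = −2^{s−1} otherwise; ψ(ω^a R_3) = −2^{s−1}(2^s − 1) if a ≡ 0 (mod M), ψ(ω^a R_3) = −2^{s−1}(2^s − 1) if −a mod M ∈ T_1, and ψ(ω^a R_3) = 2^{s−1} otherwise. -/

import Mathlib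

noncomputable section

open scoped BigOperators

/-- `M = 2^{2s} + 2^s + 1`. -/
abbrev Mof (s : ℕ) : ℕ := 2 ^ (2 * s) + 2 ^ s + 1

/-- The relative trace from `F` (of order `2^{3s}`) to its subfield `E` of order `2^s`:
`Tr_{F/E}(x) = x + x^{2^s} + x^{2^{2s}}`, viewed as a map `F → F`. -/
def trFE {F : Type*} [Field F] (s : ℕ) (x : F) : F :=
  x + x ^ (2 ^ s) + x ^ (2 ^ (2 * s))

/-- `ψ(x) = 1` if the absolute trace `Tr_{F/𝔽₂}(x) = 0`, and `-1` otherwise. -/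
def psi (F : Type*) [Field F] [Algebra (ZMod 2) F] (x : F) : ℤ :=
  if Algebra.trace (ZMod 2) F x = 0 then 1 else -1

/-- `ψ(cS) = ∑_{x ∈ S} ψ(c·x)`. -/
def psiSum (F : Type*) [Field F] [Algebra (ZMod 2) F] (c : F) (S : Set F) : ℤ :=
  ∑ᶠ x ∈ S, psi F (c * x)

/-- `D = {u ∈ F^× : Tr_{F/E}(u⁻¹) = 0}`. -/
def Dset (F : Type*) [Field F] (s : ℕ) : Set F :=
  {u | u ≠ 0 ∧ trFE s u⁻¹ = 0}

/-- `S_a = {u ∈ F^× : Tr_{F/E}(u^{2^s+1}) = 0 ∧ Tr_{F/E}(ω^a u) = 0}`. -/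
def Sa {F : Type*} [Field F] (s : ℕ) (ω : F) (a : ℤ) : Set F :=
  {u | u ≠ 0 ∧ trFE s (u ^ (2 ^ s + 1)) = 0 ∧ trFE s (ω ^ a * u) = 0}

/-- `T₁ ⊆ ℤ/Mℤ`: classes `a` with `|S_a| = 2^s - 1`. -/
def T1 {F : Type*} [Field F] (s : ℕ) (ω : F) : Set (ZMod (Mof s)) :=
  {x | (Sa s ω (x.val : ℤ)).ncard = 2 ^ s - 1}

/-- `T₂ ⊆ ℤ/Mℤ`: classes `a` with `|S_a| = 2(2^s - 1)`. -/
def T2 {F : Type*} [Field F] (s : ℕ) (ω : F) : Set (ZMod (Mof s)) :=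
  {x | (Sa s ω (x.val : ℤ)).ncard = 2 * (2 ^ s - 1)}

/-- `T₃ ⊆ ℤ/Mℤ`: classes `a` with `|S_a| = 0`. -/
def T3 {F : Type*} [Field F] (s : ℕ) (ω : F) : Set (ZMod (Mof s)) :=
  {x | (Sa s ω (x.val : ℤ)).ncard = 0}

/-- The cyclotomic class `C_i^{(M,K)} = {g^{i+Mt} : t ∈ ℤ}`. -/
def cyc {K : Type*} [Field K] (M : ℕ) (g : K) (i : ℤ) : Set K :=
  {x | ∃ t : ℤ, x = g ^ (i + (M : ℤ) * t)}

/-- `⋃_{i ∈ T} C_i^{(M,K)}` for a set `T ⊆ ℤ/Mℤ` of indices. -/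
def Rclass {K : Type*} [Field K] (s : ℕ) (g : K) (T : Set (ZMod (Mof s))) : Set K :=
  ⋃ i ∈ T, cyc (Mof s) g ((i.val : ℤ))

/-- The family `R_0 = {0}`, `R_k = ⋃_{i ∈ T_k} C_i^{(M,K)}`, `k = 1, 2, 3`. -/
def Rfam {F K : Type*} [Field F] [Field K] (s : ℕ) (ω : F) (g : K) : Fin 4 → Set K :=
  ![{0}, Rclass s g (T1 s ω), Rclass s g (T2 s ω), Rclass s g (T3 s ω)]

/-- Indicator `[P] = 1` if `P` holds, `0` otherwise. -/
def Ind (P : Prop) : ℤ := @ite ℤ P (Classical.propDecidable P) 1 0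


section aux
set_option linter.unusedSectionVars false
open Finset Classical

variable {F : Type*} [Field F] [Fintype F] 

def tt (φ : F →+* F) (x : F) : F := x + φ x + φ (φ x)
def qq (φ : F →+* F) (u : F) : F := tt φ (u * φ u)
def bb (φ : F →+* F) (z u : F) : F := tt φ (z * (φ u + φ (φ u)))

def Ef (φ : F →+* F) : Finset F := univ.filter (fun x => φ x = x)
def Kf (φ : F →+* F) (y : F) : Finset F := univ.filter (fun z => tt φ (y * z) = 0)
def Cf (φ : F →+* F) : Finset F := univ.filter (fun u => u ≠ 0 ∧ qq φ u = 0)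
def Sf (φ : F →+* F) (x : F) : Finset F := univ.filter (fun u => u ≠ 0 ∧ qq φ u = 0 ∧ tt φ (x * u) = 0)

theorem two0 [CharP F 2] : (2 : F) = 0 := CharTwo.two_eq_zero

theorem tt_add (φ : F →+* F) (x y : F) : tt φ (x + y) = tt φ x + tt φ y := by
  simp only [tt, map_add]; ring

theorem tt_mul (φ : F →+* F) (e x : F) (he : φ e = e) : tt φ (e * x) = e * tt φ x := by
  simp only [tt, map_mul, he]; ring

theorem tt_fix (φ : F →+* F) (h3 : ∀ x, φ (φ (φ x)) = x) (x : F) : φ (tt φ x) = tt φ x := by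
  simp only [tt, map_add, h3]; ring

theorem qq_fix (φ : F →+* F) (h3 : ∀ x, φ (φ (φ x)) = x) (x : F) : φ (qq φ x) = qq φ x := tt_fix φ h3 _

theorem bb_fix (φ : F →+* F) (h3 : ∀ x, φ (φ (φ x)) = x) (x y : F) : φ (bb φ x y) = bb φ x y := tt_fix φ h3 _

theorem bb_add (φ : F →+* F) (x y u : F) : bb φ (x + y) u = bb φ x u + bb φ y u := by
  simp only [bb, add_mul, tt_add]

theorem bb_mul (φ : F →+* F) (e x u : F) (he : φ e = e) : bb φ (e * x) u = e * bb φ x u := by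
  simp only [bb, mul_assoc, tt_mul φ e _ he]

theorem bb_self [CharP F 2] (φ : F →+* F) (h3 : ∀ x, φ (φ (φ x)) = x) (u : F) : bb φ u u = 0 := by
  have h2 : (2 : F) = 0 := two0
  simp only [bb, tt, map_add, map_mul, h3]
  linear_combination (u * φ u + φ u * φ (φ u) + φ (φ u) * u) * h2

theorem bb_one [CharP F 2] (φ : F →+* F) (h3 : ∀ x, φ (φ (φ x)) = x) (u : F) : bb φ 1 u = 0 := by
  have h2 : (2 : F) = 0 := two0
  simp only [bb, tt, map_add, map_mul, h3, map_one]
  linear_combination (u + φ u + φ (φ u)) * h2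

theorem qq_add_smul (φ : F →+* F) (h3 : ∀ x, φ (φ (φ x)) = x) (z e u : F) (he : φ e = e) :
    qq φ (z + e * u) = qq φ z + e * bb φ z u + e ^ 2 * qq φ u := by
  simp only [qq, bb, tt, map_add, map_mul, h3, he]; ring

theorem qq_one [CharP F 2] (φ : F →+* F) : qq φ 1 = 1 := by
  have h2 : (2 : F) = 0 := two0
  simp only [qq, tt, map_mul, map_one]; linear_combination h2

theorem qq_zero (φ : F →+* F) : qq φ 0 = 0 := by simp [qq, tt]

theorem qq_smul (φ : F →+* F) (e u : F) (he : φ e = e) : qq φ (e * u) = e ^ 2 * qq φ u := by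
  simp only [qq, tt, map_mul, he]; ring

theorem qq_add_E [CharP F 2] (φ : F →+* F) (h3 : ∀ x, φ (φ (φ x)) = x) (z e : F) (he : φ e = e) :
    qq φ (z + e) = qq φ z + e ^ 2 := by
  have h := qq_add_smul φ h3 z e 1 he
  rw [qq_one, mul_one] at h
  have : bb φ z 1 = 0 := by
    have h2 : (2 : F) = 0 := two0
    simp only [bb, tt, map_add, map_mul, h3, map_one]
    linear_combination (z + φ z + φ (φ z)) * h2
  rw [h, this]; ring

/-- `W` stable under translations by `E`. -/
theorem card_zero_mul [CharP F 2] (φ : F →+* F) (h3 : ∀ x, φ (φ (φ x)) = x) (r : F → F)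
    (hr1 : ∀ x, φ x = x → φ (r x) = r x) (hr2 : ∀ x, φ x = x → r x ^ 2 = x)
    (hr3 : ∀ x, φ x = x → r (x ^ 2) = x)
    (W : Finset F) (hW : ∀ w ∈ W, ∀ e, φ e = e → w + e ∈ W) :
    (W.filter (fun u => qq φ u = 0)).card * (Ef φ).card = W.card := by
  have h2 : (2 : F) = 0 := two0
  rw [← card_product]
  apply Finset.card_nbij' (fun p => p.1 + p.2) (fun w => (w + r (qq φ w), r (qq φ w)))
  · rintro ⟨u, e⟩ h
    simp [Ef] at h ⊢
    exact hW _ h.1.1 _ h.2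
  · intro w hw
    have hf := hr1 _ (qq_fix φ h3 w)
    simp [Ef] at hw ⊢
    refine ⟨⟨hW _ hw _ hf, ?_⟩, hf⟩
    rw [qq_add_E φ h3 _ _ hf, hr2 _ (qq_fix φ h3 w)]
    linear_combination qq φ w * h2
  · rintro ⟨u, e⟩ h
    simp [Ef] at h
    obtain ⟨⟨h1, h4⟩, h5⟩ := h
    have : r (qq φ (u + e)) = e := by
      rw [qq_add_E φ h3 _ _ h5, h4, zero_add, hr3 _ h5]
    simp only [this, Prod.mk.injEq, and_true]
    linear_combination e * h2
  · intro w hw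
    simp only
    linear_combination r (qq φ w) * h2

theorem Sf_card_tangent [CharP F 2] (φ : F →+* F) (h3 : ∀ x, φ (φ (φ x)) = x) (r : F → F)
    (hr1 : ∀ x, φ x = x → φ (r x) = r x) (hr2 : ∀ x, φ x = x → r x ^ 2 = x)
    (hr3 : ∀ x, φ x = x → r (x ^ 2) = x) (q : ℕ) (hq : 0 < q) (hE : (Ef φ).card = q)
    (hK : ∀ y, y ≠ 0 → (Kf φ y).card = q ^ 2) (x : F) (hx : x ≠ 0) (ht : tt φ x = 0) :
    (Sf φ x).card + 1 = q := by
  have h := card_zero_mul φ h3 r hr1 hr2 hr3 (Kf φ x) (by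
    intro w hw e he
    simp only [Kf, mem_filter, mem_univ, true_and] at hw ⊢
    rw [mul_add, tt_add, hw, mul_comm x e, tt_mul φ _ _ he, ht]; simp)
  rw [hE, hK x hx, pow_two] at h
  have h := Nat.eq_of_mul_eq_mul_right hq h
  rw [← h, ← card_insert_of_notMem (a := (0 : F)) (s := Sf φ x) (by simp [Sf])]
  congr 1
  ext u
  by_cases hu : u = 0
  · subst hu; simp [Kf, Sf, qq_zero]; simp [tt]
  · simp [Kf, Sf, hu, and_comm]

theorem Cf_card [CharP F 2] (φ : F →+* F) (h3 : ∀ x, φ (φ (φ x)) = x) (r : F → F)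
    (hr1 : ∀ x, φ x = x → φ (r x) = r x) (hr2 : ∀ x, φ x = x → r x ^ 2 = x)
    (hr3 : ∀ x, φ x = x → r (x ^ 2) = x) (q : ℕ) (hq : 0 < q) (hE : (Ef φ).card = q)
    (hF : Fintype.card F = q ^ 3) :
    (Cf φ).card + 1 = q ^ 2 := by
  have h := card_zero_mul φ h3 r hr1 hr2 hr3 univ (by simp)
  rw [hE, card_univ, hF, pow_succ] at h
  have h := Nat.eq_of_mul_eq_mul_right hq h
  rw [← h, ← card_insert_of_notMem (a := (0 : F)) (s := Cf φ) (by simp [Cf])]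
  congr 1
  ext u
  by_cases hu : u = 0
  · subst hu; simp [qq_zero]
  · simp [Cf, hu]

theorem Sf_card_secant [CharP F 2] (φ : F →+* F) (h3 : ∀ x, φ (φ (φ x)) = x) 
    (q : ℕ) (hq : 0 < q) (hE : (Ef φ).card = q)
    (hK : ∀ y, y ≠ 0 → (Kf φ y).card = q ^ 2) (x : F) (hx : x ≠ 0) (ht : tt φ x ≠ 0)
    (u : F) (hu : u ∈ Sf φ x) :
    (Sf φ x).card + 2 = 2 * q := by
  have h2 : (2 : F) = 0 := two0
  simp only [Sf, mem_filter, mem_univ, true_and] at hu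
  obtain ⟨hu0, hQu, hxu⟩ := hu
  have hEnot : φ u ≠ u := by
    intro h
    have := qq_add_E φ h3 0 u h
    rw [zero_add, hQu, qq_zero, zero_add] at this
    exact hu0 (by simpa using this.symm)
  set y := φ u + φ (φ u) with hy
  have hy0 : y ≠ 0 := by
    intro h0
    apply hEnot
    have : φ u = φ (φ u) := by linear_combination h0 - φ (φ u) * h2
    exact (φ.injective this).symm
  -- the line of B(.,u)=0 is E + E u
  have hspan : ((Ef φ) ×ˢ (Ef φ)).image (fun p : F × F => p.1 + p.2 * u) = Kf φ y := by
    apply eq_of_subset_of_card_le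
    · intro z hz
      simp only [mem_image, mem_product, Ef, mem_filter, mem_univ, true_and, Prod.exists] at hz
      obtain ⟨a, b, ⟨ha, hb⟩, rfl⟩ := hz
      simp only [Kf, mem_filter, mem_univ, true_and]
      have e1 : tt φ (y * (a + b * u)) = bb φ (a * 1 + b * u) u := by
        simp only [bb]; rw [mul_comm, mul_one]
      rw [e1, bb_add, bb_mul φ _ _ _ ha, bb_mul φ _ _ _ hb, bb_self φ h3, bb_one φ h3]; simp
    · rw [hK y hy0, card_image_of_injOn, card_product, hE, pow_two]
      rintro ⟨a, b⟩ h ⟨a', b'⟩ h' heq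
      simp [Ef] at h h' heq
      have hb : b = b' := by
        by_contra hne
        have hne' : b - b' ≠ 0 := sub_ne_zero.2 hne
        apply hEnot
        have : u = (a' - a) / (b - b') := by
          field_simp; linear_combination heq
        rw [this]; simp [h, h']
      subst hb
      simpa using heq
  have hzE : ∀ z, tt φ (x * z) = 0 → bb φ z u = 0 → ∃ e, φ e = e ∧ z = e * u := by
    intro z hz hbz
    have : z ∈ Kf φ y := by
      simp only [Kf, mem_filter, mem_univ, true_and]; rw [mul_comm]; exact hbz
    rw [← hspan] at this
    simp only [mem_image, mem_product, Ef, mem_filter, mem_univ, true_and, Prod.exists] at this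
    obtain ⟨a, b, ⟨ha, hb⟩, rfl⟩ := this
    have e1 : x * (a + b * u) = a * x + b * (x * u) := by ring
    rw [e1, tt_add, tt_mul φ _ _ ha, tt_mul φ _ _ hb, hxu, mul_zero, add_zero] at hz
    have ha0 : a = 0 := by simpa [ht] using hz
    exact ⟨b, hb, by rw [ha0, zero_add]⟩
  have hL : ((Kf φ x).filter (fun z => bb φ z u = 0)) = (Ef φ).image (fun e => e * u) := by
    ext z
    simp only [Kf, Ef, mem_filter, mem_univ, true_and, mem_image]
    constructor
    · rintro ⟨h, h'⟩
      obtain ⟨e, he, rfl⟩ := hzE z h h'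
      exact ⟨e, he, rfl⟩
    · rintro ⟨e, he, rfl⟩
      refine ⟨?_, ?_⟩
      · rw [mul_left_comm, tt_mul φ _ _ he, hxu, mul_zero]
      · rw [bb_mul φ _ _ _ he, bb_self φ h3, mul_zero]
  have hLc : ((Kf φ x).filter (fun z => bb φ z u = 0)).card = q := by
    rw [hL, card_image_of_injective _ (mul_left_injective₀ hu0), hE]
  have hKx := hK x hx
  rw [← card_filter_add_card_filter_not (s := Kf φ x) (fun z => bb φ z u = 0), hLc] at hKx
  have hcount : ((Kf φ x).filter (fun z => ¬ bb φ z u = 0 ∧ qq φ z = 0)).card * (Ef φ).card 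
      = ((Kf φ x).filter (fun z => ¬ bb φ z u = 0)).card := by
    rw [← card_product]
    apply Finset.card_nbij' (fun p => p.1 + p.2 * u) 
      (fun w => (w + (qq φ w / bb φ w u) * u, qq φ w / bb φ w u))
    · rintro ⟨z, e⟩ h
      simp [Ef, Kf] at h ⊢
      obtain ⟨⟨h1, h4, h5⟩, h6⟩ := h
      rw [mul_add, tt_add, mul_left_comm, tt_mul φ _ _ h6, bb_add, bb_mul φ _ _ _ h6, bb_self φ h3,
        h1, hxu]
      simpa using h4
    · intro w hw
      have hf : φ (qq φ w / bb φ w u) = qq φ w / bb φ w u := by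
        rw [map_div₀, qq_fix φ h3, bb_fix φ h3]
      simp [Ef, Kf] at hw ⊢
      refine ⟨⟨?_, ?_, ?_⟩, by rw [qq_fix φ h3, bb_fix φ h3]⟩
      · rw [mul_add, tt_add, mul_left_comm, tt_mul φ _ _ hf, hxu, hw.1]; simp
      · rw [bb_add, bb_mul φ _ _ _ hf, bb_self φ h3]; simpa using hw.2
      · rw [qq_add_smul φ h3 _ _ _ hf, hQu, div_mul_cancel₀ _ hw.2]
        linear_combination qq φ w * h2
    · rintro ⟨z, e⟩ h
      simp [Ef, Kf] at h
      obtain ⟨⟨h1, h4, h5⟩, h6⟩ := h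
      have : qq φ (z + e * u) / bb φ (z + e * u) u = e := by
        rw [qq_add_smul φ h3 _ _ _ h6, hQu, h5, bb_add, bb_mul φ _ _ _ h6, bb_self φ h3]
        simp [h4]
      simp only [this, Prod.mk.injEq, and_true]
      linear_combination e * u * h2
    · intro w hw
      simp only
      linear_combination (qq φ w / bb φ w u) * u * h2
  have hsplit : (insert (0 : F) (Sf φ x)) = (Kf φ x).filter (fun z => bb φ z u = 0) ∪
      (Kf φ x).filter (fun z => ¬ bb φ z u = 0 ∧ qq φ z = 0) := by
    ext z
    simp only [mem_insert, mem_union, mem_filter, Kf, Sf, mem_univ, true_and]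
    by_cases hz : z = 0
    · subst hz; simp [tt, bb]
    · simp only [hz, false_or, not_false_eq_true, true_and, ne_eq]
      constructor
      · rintro ⟨h, h'⟩
        by_cases hb : bb φ z u = 0
        · exact Or.inl ⟨h', hb⟩
        · exact Or.inr ⟨h', hb, h⟩
      · rintro (⟨h, h'⟩ | ⟨h, h', h''⟩)
        · obtain ⟨e, he, rfl⟩ := hzE z h h'
          exact ⟨by rw [qq_smul φ _ _ he, hQu, mul_zero], h⟩
        · exact ⟨h'', h⟩
  have hc := congrArg Finset.card hsplit
  rw [card_insert_of_notMem (by simp [Sf]), card_union_of_disjoint, hLc] at hc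
  · rw [← hcount, hE] at hKx
    have : ((Kf φ x).filter (fun z => ¬ bb φ z u = 0 ∧ qq φ z = 0)).card + 1 = q := by
      apply Nat.eq_of_mul_eq_mul_right hq
      rw [← pow_two, ← hKx]; ring
    omega
  · rw [disjoint_filter]
    intro z _ h h'
    exact h'.1 h

variable [Algebra (ZMod 2) F]

theorem psi_add (x y : F) : psi F (x + y) = psi F x * psi F y := by
  have key : ∀ a b : ZMod 2, (if a + b = 0 then (1 : ℤ) else -1) =
      (if a = 0 then 1 else -1) * (if b = 0 then 1 else -1) := by decide
  simp only [psi, map_add]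
  convert key _ _

theorem psi_sum_zero (H : Finset F) (d h0 : F) (hH : ∀ h, h + h0 ∈ H ↔ h ∈ H)
    (h : psi F (d * h0) ≠ 1) : ∑ x ∈ H, psi F (d * x) = 0 := by
  have h1 : psi F (d * h0) = -1 := by
    simp only [psi] at h ⊢
    split_ifs at h ⊢ <;> simp_all
  have : ∑ x ∈ H, psi F (d * x) = ∑ x ∈ H, psi F (d * (x + h0)) := by
    symm
    apply Finset.sum_nbij (fun x => x + h0)
    · intro a ha; exact (hH a).2 ha
    · intro a _ b _ hab; simpa using hab
    · intro a ha
      refine ⟨a - h0, ?_, by simp⟩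
      have := hH (a - h0)
      rw [sub_add_cancel] at this
      exact this.1 ha
    · intro a _; rfl
  have h2 : ∑ x ∈ H, psi F (d * (x + h0)) = - ∑ x ∈ H, psi F (d * x) := by
    rw [← Finset.sum_neg_distrib]
    apply Finset.sum_congr rfl
    intro x _
    rw [mul_add, psi_add, h1]; ring
  omega

theorem exists_psi (c : F) (hc : c ≠ 0) : ∃ y, psi F (c * y) ≠ 1 := by
  by_contra! h
  apply hc
  have hn := traceForm_nondegenerate (ZMod 2) F
  apply hn.1
  intro y
  rw [Algebra.traceForm_apply]
  have := h y
  simp only [psi] at this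
  by_contra hne
  simp [hne] at this

theorem psi_zero : psi F 0 = 1 := by simp [psi]

theorem sum_all (c : F) (hc : c ≠ 0) : ∑ x : F, psi F (c * x) = 0 := by
  obtain ⟨y, hy⟩ := exists_psi c hc
  exact psi_sum_zero univ c y (by simp) hy

theorem sum_ker [CharP F 2] (φ : F →+* F) (h3 : ∀ x, φ (φ (φ x)) = x)
    (hφ : ∀ x, Algebra.trace (ZMod 2) F (φ x) = Algebra.trace (ZMod 2) F x) (d : F) :
    ∑ x ∈ Kf φ 1, psi F (d * x) = if φ d = d then ((Kf φ 1).card : ℤ) else 0 := by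
  have h2 : (2 : F) = 0 := two0
  split_ifs with hd
  · rw [Finset.card_eq_sum_ones]
    push_cast
    apply Finset.sum_congr rfl
    intro x hx
    simp only [Kf, mem_filter, mem_univ, true_and, one_mul] at hx
    have h : tt φ (d * x) = 0 := by rw [tt_mul φ _ _ hd, hx, mul_zero]
    have h' := congrArg (Algebra.trace (ZMod 2) F) h
    simp only [tt, map_add, hφ, map_zero] at h'
    have : ∀ a : ZMod 2, a + a + a = 0 → a = 0 := by decide
    simp [psi, this _ h']
  · have hne : φ (φ d) + d ≠ 0 := by
      intro h
      apply hd
      have h1 : φ (φ d) = d := by linear_combination h - d * h2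
      have := h3 d
      rwa [h1] at this
    obtain ⟨y, hy⟩ := exists_psi _ hne
    apply psi_sum_zero _ _ (φ y + y)
    · intro h
      simp only [Kf, mem_filter, mem_univ, true_and, one_mul, tt_add]
      have : tt φ (φ y) + tt φ y = 0 := by
        simp only [tt, h3]
        linear_combination (y + φ y + φ (φ y)) * h2
      rw [this, add_zero]
    · convert hy using 1
      have : Algebra.trace (ZMod 2) F (d * φ y) = Algebra.trace (ZMod 2) F (φ (φ d) * y) := by
        rw [← hφ, ← hφ]; simp [h3]
      simp only [psi]
      rw [mul_add, add_mul, map_add, map_add, this]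

theorem sum_ker' [CharP F 2] (φ : F →+* F) (h3 : ∀ x, φ (φ (φ x)) = x)
    (hφ : ∀ x, Algebra.trace (ZMod 2) F (φ x) = Algebra.trace (ZMod 2) F x)  (q : ℕ)
    (hK : ∀ y, y ≠ 0 → (Kf φ y).card = q ^ 2) (c u : F) (hu : u ≠ 0) :
    ∑ x ∈ Kf φ u, psi F (c * x) = if φ (c / u) = c / u then (q : ℤ) ^ 2 else 0 := by
  have := sum_ker φ h3 hφ (c / u)
  rw [hK 1 one_ne_zero] at this
  push_cast at this
  rw [← this]
  apply Finset.sum_nbij' (fun x => u * x) (fun x => x / u)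
  · intro x hx
    simpa [Kf] using hx
  · intro x hx
    simp [Kf] at hx ⊢
    rwa [mul_div_cancel₀ _ hu]
  · intro x _; field_simp
  · intro x _; field_simp
  · intro x _; congr 1; field_simp

theorem sum_R1 [CharP F 2] (φ : F →+* F) (h3 : ∀ x, φ (φ (φ x)) = x)
    (hφ : ∀ x, Algebra.trace (ZMod 2) F (φ x) = Algebra.trace (ZMod 2) F x)  (q : ℕ)
    (hK : ∀ y, y ≠ 0 → (Kf φ y).card = q ^ 2) (c u : F) (hu : u ≠ 0) :
    ∑ x ∈ univ.filter (fun x => x ≠ 0 ∧ tt φ (u * x) = 0), psi F (c * x) =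
      (if φ (c / u) = c / u then (q : ℤ) ^ 2 else 0) - 1 := by
  rw [← sum_ker' φ h3 hφ q hK c u hu]
  have : Kf φ u = insert 0 (univ.filter (fun x => x ≠ 0 ∧ tt φ (u * x) = 0)) := by
    ext x
    by_cases hx : x = 0
    · subst hx; simp [Kf, tt]
    · simp [Kf, hx]
  rw [this, Finset.sum_insert (by simp), mul_zero, psi_zero]; ring

theorem sum_weighted [CharP F 2] (φ : F →+* F) (h3 : ∀ x, φ (φ (φ x)) = x)
    (hφ : ∀ x, Algebra.trace (ZMod 2) F (φ x) = Algebra.trace (ZMod 2) F x)  (q : ℕ)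
    (hE : (Ef φ).card = q) (hC : (Cf φ).card + 1 = q ^ 2)
    (hK : ∀ y, y ≠ 0 → (Kf φ y).card = q ^ 2) (c : F) (hc : c ≠ 0) :
    ∑ x ∈ univ.filter (fun x : F => x ≠ 0), psi F (c * x) * ((Sf φ x).card : ℤ) =
      (if qq φ c = 0 then ((q : ℤ) - 1) * q ^ 2 else 0) - (q ^ 2 - 1) := by
  have e1 : ∀ x : F, ((Sf φ x).card : ℤ) = ∑ u ∈ Cf φ, if tt φ (u * x) = 0 then 1 else 0 := by
    intro x
    rw [← Finset.sum_filter, ← Nat.cast_one, ← Nat.cast_sum, ← Finset.card_eq_sum_ones]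
    congr 2
    ext u
    simp [Sf, Cf, mul_comm, and_assoc]
  simp only [e1, Finset.mul_sum]
  rw [Finset.sum_comm]
  have e2 : ∀ u ∈ Cf φ, ∑ x ∈ univ.filter (fun x : F => x ≠ 0),
      psi F (c * x) * (if tt φ (u * x) = 0 then 1 else 0) =
      (if φ (c / u) = c / u then (q : ℤ) ^ 2 else 0) - 1 := by
    intro u hu
    rw [← sum_R1 φ h3 hφ q hK c u (by simp [Cf] at hu; exact hu.1)]
    rw [← Finset.filter_filter, Finset.sum_filter (fun x => tt φ (u * x) = 0)]
    apply Finset.sum_congr rfl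
    intro x _
    split_ifs <;> simp
  rw [Finset.sum_congr rfl e2, Finset.sum_sub_distrib, ← Finset.sum_filter, Finset.sum_const,
    Finset.sum_const]
  have hC' : ((Cf φ).card : ℤ) = (q : ℤ) ^ 2 - 1 := by
    have : (((Cf φ).card + 1 : ℕ) : ℤ) = (q : ℤ) ^ 2 := by rw [hC]; push_cast; rfl
    push_cast at this; linarith
  rw [nsmul_eq_mul, nsmul_eq_mul, hC', mul_one]
  congr 1
  split_ifs with hQ
  · congr 1
    have : insert 0 ((Cf φ).filter (fun u => φ (c / u) = c / u)) = (Ef φ).image (fun e => c * e) := by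
      ext u
      simp only [mem_insert, mem_filter, Cf, Ef, mem_image, mem_univ, true_and]
      constructor
      · rintro (rfl | ⟨⟨h, h'⟩, h''⟩)
        · exact ⟨0, by simp, by simp⟩
        · refine ⟨u / c, ?_, by field_simp⟩
          rw [← inv_div, map_inv₀, h'']
      · rintro ⟨e, he, rfl⟩
        by_cases h0 : e = 0
        · simp [h0]
        · right
          refine ⟨⟨mul_ne_zero hc h0, ?_⟩, ?_⟩
          · rw [mul_comm, qq_smul φ _ _ he, hQ, mul_zero]
          · have : c / (c * e) = e⁻¹ := by field_simp
            rw [this, map_inv₀, he]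
    have h := congrArg Finset.card this
    rw [card_insert_of_notMem (by simp [Cf]), card_image_of_injective _ (mul_right_injective₀ hc), hE] at h
    rw [← h]; push_cast; ring
  · rw [Finset.filter_eq_empty_iff.2]
    · simp
    · intro u hu h
      simp [Cf] at hu
      apply hQ
      have : c = (c / u) * u := by rw [div_mul_cancel₀ _ hu.1]
      rw [this, qq_smul φ _ _ h, hu.2, mul_zero]

theorem sums_all [CharP F 2] (φ : F →+* F) (h3 : ∀ x, φ (φ (φ x)) = x) (r : F → F)
    (hr1 : ∀ x, φ x = x → φ (r x) = r x) (hr2 : ∀ x, φ x = x → r x ^ 2 = x)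
    (hr3 : ∀ x, φ x = x → r (x ^ 2) = x)
    (hφ : ∀ x, Algebra.trace (ZMod 2) F (φ x) = Algebra.trace (ZMod 2) F x)  (q : ℕ) (hq : 2 ≤ q)
    (hE : (Ef φ).card = q) (hF : Fintype.card F = q ^ 3)
    (hK : ∀ y, y ≠ 0 → (Kf φ y).card = q ^ 2) (c : F) (hc : c ≠ 0) :
    (∀ x, x ≠ 0 → ((Sf φ x).card = q - 1 ↔ tt φ x = 0)) ∧
    ∑ x ∈ univ.filter (fun x => x ≠ 0 ∧ (Sf φ x).card = q - 1), psi F (c * x) =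
      (if φ c = c then (q : ℤ) ^ 2 else 0) - 1 ∧
    (∑ x ∈ univ.filter (fun x => x ≠ 0 ∧ (Sf φ x).card = q - 1), psi F (c * x) +
      2 * ∑ x ∈ univ.filter (fun x => x ≠ 0 ∧ (Sf φ x).card = 2 * (q - 1)), psi F (c * x) =
      (if qq φ c = 0 then (q : ℤ) ^ 2 else 0) - (q + 1)) ∧
    (∑ x ∈ univ.filter (fun x => x ≠ 0 ∧ (Sf φ x).card = q - 1), psi F (c * x) +
      ∑ x ∈ univ.filter (fun x => x ≠ 0 ∧ (Sf φ x).card = 2 * (q - 1)), psi F (c * x) +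
      ∑ x ∈ univ.filter (fun x => x ≠ 0 ∧ (Sf φ x).card = 0), psi F (c * x) = -1) := by
  have hq0 : 0 < q := by omega
  have hC := Cf_card φ h3 r hr1 hr2 hr3 q hq0 hE hF
  have hT : ∀ x, x ≠ 0 → tt φ x = 0 → (Sf φ x).card = q - 1 := by
    intro x hx ht
    have := Sf_card_tangent φ h3 r hr1 hr2 hr3 q hq0 hE hK x hx ht
    omega
  have hN : ∀ x, x ≠ 0 → tt φ x ≠ 0 → (Sf φ x).card = 2 * (q - 1) ∨ (Sf φ x).card = 0 := by
    intro x hx ht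
    rcases (Sf φ x).eq_empty_or_nonempty with h | ⟨u, hu⟩
    · right; rw [h]; simp
    · left
      have := Sf_card_secant φ h3 q hq0 hE hK x hx ht u hu
      omega
  have hiff : ∀ x, x ≠ 0 → ((Sf φ x).card = q - 1 ↔ tt φ x = 0) := by
    intro x hx
    refine ⟨fun h => ?_, hT x hx⟩
    by_contra ht
    rcases hN x hx ht with h' | h' <;> omega
  have htri : ∀ x, x ≠ 0 → (Sf φ x).card = q - 1 ∨ (Sf φ x).card = 2 * (q - 1) ∨ (Sf φ x).card = 0 := by
    intro x hx
    by_cases ht : tt φ x = 0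
    · exact Or.inl (hT x hx ht)
    · exact Or.inr (hN x hx ht)
  refine ⟨hiff, ?_, ?_, ?_⟩
  · have := sum_R1 φ h3 hφ q hK c 1 one_ne_zero
    simp only [div_one, one_mul] at this
    rw [← this]
    apply Finset.sum_congr _ (fun _ _ => rfl)
    ext x
    simp only [mem_filter, mem_univ, true_and]
    constructor
    · rintro ⟨h, h'⟩; exact ⟨h, (hiff x h).1 h'⟩
    · rintro ⟨h, h'⟩; exact ⟨h, (hiff x h).2 h'⟩
  · have hw := sum_weighted φ h3 hφ q hE hC hK c hc
    have hqz : ((q : ℤ) - 1) ≠ 0 := by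
      have : (2 : ℤ) ≤ q := by exact_mod_cast hq
      omega
    apply mul_left_cancel₀ hqz
    have e : ∑ x ∈ univ.filter (fun x : F => x ≠ 0), psi F (c * x) * ((Sf φ x).card : ℤ) =
        ((q : ℤ) - 1) * (∑ x ∈ univ.filter (fun x => x ≠ 0 ∧ (Sf φ x).card = q - 1), psi F (c * x) +
      2 * ∑ x ∈ univ.filter (fun x => x ≠ 0 ∧ (Sf φ x).card = 2 * (q - 1)), psi F (c * x)) := by
      simp only [← Finset.filter_filter]
      rw [Finset.sum_filter (fun x => (Sf φ x).card = q - 1),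
        Finset.sum_filter (fun x => (Sf φ x).card = 2 * (q - 1)), Finset.mul_sum,
        ← Finset.sum_add_distrib, Finset.mul_sum]
      apply Finset.sum_congr rfl
      intro x hx
      simp only [mem_filter, mem_univ, true_and] at hx
      have h1 : ((q - 1 : ℕ) : ℤ) = q - 1 := by push_cast [hq0]; rfl
      rcases htri x hx with h | h | h
      · rw [if_pos h, if_neg (by omega), h, h1]; ring
      · rw [if_pos h, if_neg (by omega), h]; push_cast [h1]; ring
      · rw [if_neg (by omega), if_neg (by omega), h]; simp
    rw [← e, hw]
    split_ifs <;> ring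
  · have ha := sum_all c hc
    rw [← Finset.sum_filter_add_sum_filter_not univ (fun x : F => x ≠ 0)] at ha
    have h0 : univ.filter (fun x : F => ¬ x ≠ 0) = {0} := by ext; simp
    rw [h0, Finset.sum_singleton, mul_zero, psi_zero] at ha
    rw [eq_neg_of_add_eq_zero_left ha |>.symm]
    simp only [← Finset.filter_filter]
    rw [Finset.sum_filter (fun x => (Sf φ x).card = q - 1),
        Finset.sum_filter (fun x => (Sf φ x).card = 2 * (q - 1)), 
        Finset.sum_filter (fun x => (Sf φ x).card = 0), 
        ← Finset.sum_add_distrib, ← Finset.sum_add_distrib]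
    apply Finset.sum_congr rfl
    intro x hx
    simp only [mem_filter, mem_univ, true_and] at hx
    rcases htri x hx with h | h | h
    · rw [if_pos h, if_neg (by omega), if_neg (by omega)]; ring
    · rw [if_pos h, if_neg (by omega), if_neg (by omega)]; ring
    · rw [if_neg (by omega), if_neg (by omega), if_pos h]; ring


theorem counts [CharP F 2] (φ : F →+* F) (h3 : ∀ x, φ (φ (φ x)) = x) (q : ℕ) (hq : 2 ≤ q)
    (hφq : ∀ x, φ x = x ^ q) (hF : Fintype.card F = q ^ 3) :
    (Ef φ).card = q ∧ ∀ y, y ≠ 0 → (Kf φ y).card = q ^ 2 := by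
  have hE : (Ef φ).card ≤ q := by
    have hp : (Polynomial.X ^ q - Polynomial.X : Polynomial F) ≠ 0 :=
      FiniteField.X_pow_card_sub_X_ne_zero F (by omega)
    have hd : (Polynomial.X ^ q - Polynomial.X : Polynomial F).natDegree = q :=
      FiniteField.X_pow_card_sub_X_natDegree_eq F (by omega)
    rw [← hd]
    refine le_trans (Finset.card_le_card ?_) (le_trans (Multiset.toFinset_card_le _)
      (Polynomial.card_roots' _))
    intro x hx
    simp only [Ef, mem_filter, mem_univ, true_and, hφq] at hx
    rw [Multiset.mem_toFinset, Polynomial.mem_roots hp]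
    simp [hx]
  have hK1 : (Kf φ 1).card ≤ q ^ 2 := by
    have hlt : (Polynomial.X ^ q + Polynomial.X : Polynomial F).degree < ((q ^ 2 : ℕ) : WithBot ℕ) := by
      refine lt_of_le_of_lt (Polynomial.degree_add_le _ _) ?_
      rw [Polynomial.degree_X_pow, Polynomial.degree_X]
      have h1 : q < q ^ 2 := by nlinarith
      have h2 : 1 < q ^ 2 := by nlinarith
      exact max_lt (by exact_mod_cast h1) (by exact_mod_cast h2)
    have hm : (Polynomial.X ^ (q ^ 2) + (Polynomial.X ^ q + Polynomial.X) : Polynomial F).Monic :=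
      Polynomial.monic_X_pow_add hlt
    have hd : (Polynomial.X ^ (q ^ 2) + (Polynomial.X ^ q + Polynomial.X) : Polynomial F).natDegree = q ^ 2 := by
      apply Polynomial.natDegree_eq_of_degree_eq_some
      rw [Polynomial.degree_add_eq_left_of_degree_lt, Polynomial.degree_X_pow]
      rwa [Polynomial.degree_X_pow]
    refine le_trans ?_ (le_of_eq hd)
    refine le_trans (Finset.card_le_card ?_) (le_trans (Multiset.toFinset_card_le _)
      (Polynomial.card_roots' _))
    intro x hx
    simp only [Kf, mem_filter, mem_univ, true_and, one_mul, tt, hφq, ← pow_mul] at hx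
    rw [Multiset.mem_toFinset, Polynomial.mem_roots hm.ne_zero]
    simp only [Polynomial.IsRoot, Polynomial.eval_add, Polynomial.eval_pow, Polynomial.eval_X]
    rw [pow_two, ← hx]; ring
  have hprod : Fintype.card F ≤ (Kf φ 1).card * (Ef φ).card := by
    rw [← Finset.card_univ]
    apply Finset.card_le_mul_card_image_of_maps_to (f := tt φ)
    · intro x _
      simp [Ef, tt_fix φ h3]
    · intro b _
      rcases (univ.filter (fun a => tt φ a = b)).eq_empty_or_nonempty with h | ⟨z, hz⟩
      · rw [h]; simp
      · apply Finset.card_le_card_of_injOn (fun x => x - z)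
        · intro x hx
          simp [Kf] at hx hz ⊢
          have := tt_add φ (x - z) z
          rw [sub_add_cancel, hx, hz] at this
          simpa using this
        · intro x _ y _ h; simpa using h
  rw [hF] at hprod
  have hE' : (Ef φ).card = q := by
    apply le_antisymm hE
    have : q ^ 2 * q ≤ q ^ 2 * (Ef φ).card := by
      calc q ^ 2 * q = q ^ 3 := by ring
        _ ≤ _ := hprod
        _ ≤ _ := Nat.mul_le_mul_right _ hK1
    exact Nat.le_of_mul_le_mul_left this (by positivity)
  have hK' : (Kf φ 1).card = q ^ 2 := by
    apply le_antisymm hK1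
    rw [hE', pow_succ] at hprod
    exact Nat.le_of_mul_le_mul_right hprod (by omega)
  refine ⟨hE', fun y hy => ?_⟩
  rw [← hK']
  apply Finset.card_nbij' (fun x => y * x) (fun x => x / y)
  · intro x hx
    simpa [Kf] using hx
  · intro x hx
    simp [Kf] at hx ⊢
    rwa [mul_div_cancel₀ _ hy]
  · intro x _; field_simp
  · intro x _; field_simp

theorem trace_pow [CharP F 2] (s : ℕ) (x : F) :
    Algebra.trace (ZMod 2) F (x ^ 2 ^ s) = Algebra.trace (ZMod 2) F x := by
  induction s with
  | zero => simp
  | succ n ih =>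
    rw [pow_succ, pow_mul]
    have := Algebra.trace_eq_of_algEquiv (FiniteField.frobeniusAlgEquivOfAlgebraic (ZMod 2) F) (x ^ 2 ^ n)
    rw [FiniteField.coe_frobeniusAlgEquivOfAlgebraic, ZMod.card] at this
    rw [this, ih]

theorem psiSum_fin (c : F) (S : Set F) (R : Finset F) (h : ∀ x, x ∈ S ↔ x ∈ R) :
    psiSum F c S = ∑ x ∈ R, psi F (c * x) := by
  have : S = ↑R := by ext x; simp [h]
  rw [psiSum, this]
  exact finsum_mem_coe_finset _ _

/-- Everything in terms of the original definitions. -/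
theorem main_aux (s : ℕ) (hs : 1 ≤ s) (hF : Fintype.card F = 2 ^ (3 * s)) (c : F) (hc : c ≠ 0) :
    let R : ℕ → Set F := fun k =>
      {x | x ≠ 0 ∧ ({u : F | u ≠ 0 ∧ trFE s (u ^ (2 ^ s + 1)) = 0 ∧
        trFE s (x * u) = 0}).ncard = k}
    (∀ e x : F, e ^ 2 ^ s = e → trFE s (e * x) = e * trFE s x) ∧
    (({u : F | u ≠ 0 ∧ trFE s (u ^ (2 ^ s + 1)) = 0 ∧
        trFE s (c⁻¹ * u) = 0}).ncard = 2 ^ s - 1 ↔ trFE s (c ^ (2 ^ s + 1)) = 0) ∧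
    (c ^ 2 ^ s = c → trFE s (c ^ (2 ^ s + 1)) ≠ 0) ∧
    psiSum F c (R (2 ^ s - 1)) =
      (if c ^ 2 ^ s = c then (2 ^ s : ℤ) ^ 2 else 0) - 1 ∧
    (psiSum F c (R (2 ^ s - 1)) +
      2 * psiSum F c (R (2 * (2 ^ s - 1))) =
      (if trFE s (c ^ (2 ^ s + 1)) = 0 then (2 ^ s : ℤ) ^ 2 else 0) - (2 ^ s + 1)) ∧
    (psiSum F c (R (2 ^ s - 1)) +
      psiSum F c (R (2 * (2 ^ s - 1))) +
      psiSum F c (R 0) = -1) := by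
  have : CharP F 2 := charP_of_injective_algebraMap (algebraMap (ZMod 2) F).injective 2
  have hq : 2 ≤ 2 ^ s := by
    calc 2 = 2 ^ 1 := rfl
      _ ≤ 2 ^ s := Nat.pow_le_pow_right (by norm_num) hs
  obtain ⟨φ, hφ⟩ : ∃ φ : F →+* F, ∀ x, φ x = x ^ 2 ^ s :=
    ⟨iterateFrobenius F 2 s, fun x => iterateFrobenius_def 2 s x⟩
  have hF' : Fintype.card F = (2 ^ s) ^ 3 := by rw [hF]; ring
  have h3 : ∀ x, φ (φ (φ x)) = x := by
    intro x
    rw [hφ, hφ, hφ, ← pow_mul, ← pow_mul]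
    have := FiniteField.pow_card x
    rw [hF'] at this
    rw [← pow_two, ← pow_succ']
    exact this
  have htt : ∀ x, tt φ x = trFE s x := by
    intro x
    simp only [tt, trFE, hφ]
    rw [← pow_mul, two_mul, pow_add]
  have hqq : ∀ x, qq φ x = trFE s (x ^ (2 ^ s + 1)) := by
    intro x
    rw [qq, htt, hφ, pow_succ']
  have hpred : 2 ^ (s - 1) * 2 = 2 ^ s := by
    rw [← pow_succ]; congr 1; omega
  obtain ⟨hE, hK⟩ := counts φ h3 (2 ^ s) hq hφ hF'
  have hr2 : ∀ x, φ x = x → (x ^ 2 ^ (s - 1)) ^ 2 = x := by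
    intro x hx
    rw [← pow_mul, hpred, ← hφ, hx]
  have hr3 : ∀ x, φ x = x → (x ^ 2) ^ 2 ^ (s - 1) = x := by
    intro x hx
    rw [← pow_mul, mul_comm, hpred, ← hφ, hx]
  have hr1 : ∀ x, φ x = x → φ (x ^ 2 ^ (s - 1)) = x ^ 2 ^ (s - 1) := by
    intro x hx; rw [map_pow, hx]
  obtain ⟨h1, h4, h5, h6⟩ := sums_all φ h3 (fun x => x ^ 2 ^ (s - 1)) hr1 hr2 hr3
    (fun x => by rw [hφ]; exact trace_pow s x) (2 ^ s) hq hE hF' hK c hc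
  have hS : ∀ x, ({u : F | u ≠ 0 ∧ trFE s (u ^ (2 ^ s + 1)) = 0 ∧
        trFE s (x * u) = 0}).ncard = (Sf φ x).card := by
    intro x
    rw [← Set.ncard_coe_finset]
    congr 1
    ext u
    simp [Sf, htt, hqq]
  intro R
  have hR : ∀ k, psiSum F c (R k) =
      ∑ x ∈ univ.filter (fun x => x ≠ 0 ∧ (Sf φ x).card = k), psi F (c * x) := by
    intro k
    apply psiSum_fin
    intro x
    simp only [R, hS]
    simp
  simp only [hR, hS]
  refine ⟨?_, ?_, ?_, ?_, ?_, h6⟩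
  · intro e x he
    rw [← htt, ← htt, tt_mul φ _ _ (by rw [hφ, he])]
  · rw [h1 _ (inv_ne_zero hc), ← hqq]
    have hc1 : φ c ≠ 0 := by simpa using hc
    have hc2 : φ (φ c) ≠ 0 := by simpa using hc
    have : tt φ c⁻¹ = qq φ c / (c * φ c * φ (φ c)) := by
      simp only [tt, qq, map_inv₀, map_mul, h3]
      field_simp
      ring
    rw [this, div_eq_zero_iff]
    simp [hc]
  · intro h
    have := qq_smul φ c 1 (by rw [hφ, h])
    rw [← hqq, ← mul_one c, this, qq_one]
    simpa using hc
  · rw [h4]; push_cast; simp only [hφ]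
  · rw [h5]; push_cast; simp only [hqq]

end aux

theorem statement13 (s : ℕ) (hs : 1 ≤ s) (F : Type*) [Field F] [Fintype F] [Algebra (ZMod 2) F]
    (hF : Fintype.card F = 2 ^ (3 * s)) (ω : F)
    (hω : ∀ x : F, x ≠ 0 → ∃ n : ℕ, x = ω ^ n) :
    ∀ a : ℤ,
      ((a : ZMod (Mof s)) = 0 →
        psiSum F (ω ^ a) (Rclass s ω (T1 s ω)) = 2 ^ (2 * s) - 1) ∧
      ((a : ZMod (Mof s)) ≠ 0 →
        psiSum F (ω ^ a) (Rclass s ω (T1 s ω)) = -1) ∧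
      ((a : ZMod (Mof s)) = 0 →
        psiSum F (ω ^ a) (Rclass s ω (T2 s ω)) = -(2 ^ (s - 1)) * (2 ^ s + 1)) ∧
      (((-a : ℤ) : ZMod (Mof s)) ∈ T1 s ω →
        psiSum F (ω ^ a) (Rclass s ω (T2 s ω)) = 2 ^ (s - 1) * (2 ^ s - 1)) ∧
      ((a : ZMod (Mof s)) ≠ 0 → ((-a : ℤ) : ZMod (Mof s)) ∉ T1 s ω →
        psiSum F (ω ^ a) (Rclass s ω (T2 s ω)) = -(2 ^ (s - 1))) ∧
      ((a : ZMod (Mof s)) = 0 →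
        psiSum F (ω ^ a) (Rclass s ω (T3 s ω)) = -(2 ^ (s - 1)) * (2 ^ s - 1)) ∧
      (((-a : ℤ) : ZMod (Mof s)) ∈ T1 s ω →
        psiSum F (ω ^ a) (Rclass s ω (T3 s ω)) = -(2 ^ (s - 1)) * (2 ^ s - 1)) ∧
      ((a : ZMod (Mof s)) ≠ 0 → ((-a : ℤ) : ZMod (Mof s)) ∉ T1 s ω →
        psiSum F (ω ^ a) (Rclass s ω (T3 s ω)) = 2 ^ (s - 1)) := by
  classical
  intro a
  have hq : 2 ≤ 2 ^ s := by
    calc 2 = 2 ^ 1 := rfl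
      _ ≤ 2 ^ s := Nat.pow_le_pow_right (by norm_num) hs
  have hF' : Fintype.card F = (2 ^ s) ^ 3 := by rw [hF]; ring
  have hω0 : ω ≠ 0 := by
    rintro rfl
    have hsub : (Finset.univ : Finset F) ⊆ {0, 1} := by
      intro x _
      by_cases hx : x = 0
      · simp [hx]
      · obtain ⟨n, hn⟩ := hω x hx
        rcases Nat.eq_zero_or_pos n with h | h
        · subst h; simp [hn]
        · rw [zero_pow (by omega)] at hn; exact absurd hn hx
    have := (Finset.card_le_card hsub).trans Finset.card_le_two
    rw [Finset.card_univ, hF'] at this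
    have : 2 ^ 3 ≤ (2 ^ s) ^ 3 := Nat.pow_le_pow_left hq 3
    omega
  have : NeZero (Mof s) := ⟨by simp [Mof]⟩
  -- order of ω
  have hord : orderOf (Units.mk0 ω hω0) = (2 ^ s) ^ 3 - 1 := by
    have h1 : orderOf (Units.mk0 ω hω0) = Nat.card Fˣ := by
      apply orderOf_eq_card_of_forall_mem_zpowers
      intro x
      obtain ⟨n, hn⟩ := hω x x.ne_zero
      refine ⟨n, ?_⟩
      ext; simp [hn]
    rw [h1, Nat.card_eq_fintype_card, Fintype.card_units, hF']
  have hfac : (((2 ^ s) ^ 3 - 1 : ℕ) : ℤ) = (Mof s : ℤ) * (2 ^ s - 1) := by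
    have : 1 ≤ (2 ^ s) ^ 3 := Nat.one_le_pow _ _ (by omega)
    push_cast [this, Mof]
    ring
  have hEiff : ∀ b : ℤ, (ω ^ b) ^ 2 ^ s = ω ^ b ↔ (b : ZMod (Mof s)) = 0 := by
    intro b
    rw [ZMod.intCast_zmod_eq_zero_iff_dvd]
    have hqz : ((2 : ℤ) ^ s - 1) ≠ 0 := by
      have : (2 : ℤ) ≤ 2 ^ s := by exact_mod_cast hq
      omega
    have : (ω ^ b) ^ 2 ^ s = ω ^ b ↔ ω ^ (b * (2 ^ s - 1)) = 1 := by
      rw [mul_sub, mul_one, zpow_sub₀ hω0, div_eq_one_iff_eq (zpow_ne_zero _ hω0), zpow_mul]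
      norm_cast
    have hu : ω ^ (b * (2 ^ s - 1)) = 1 ↔ (Units.mk0 ω hω0) ^ (b * (2 ^ s - 1)) = 1 := by
      rw [Units.ext_iff, Units.val_zpow_eq_zpow_val, Units.val_mk0, Units.val_one]
    rw [this, hu, ← orderOf_dvd_iff_zpow_eq_one, hord, hfac]
    exact mul_dvd_mul_iff_right hqz
  set c := ω ^ a with hcdef
  have hc : c ≠ 0 := zpow_ne_zero _ hω0
  obtain ⟨hmul, hinv, hQE, k1, k2, k3⟩ := main_aux s hs hF c hc
  -- invariance
  have hinvar : ∀ b d : ℤ, (b : ZMod (Mof s)) = d → Sa s ω b = Sa s ω d := by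
    intro b d hbd
    ext u
    simp only [Sa, Set.mem_ofPred_eq]
    have he : (ω ^ (b - d)) ^ 2 ^ s = ω ^ (b - d) := by
      rw [hEiff]; push_cast; rw [hbd, sub_self]
    have : ω ^ b * u = ω ^ (b - d) * (ω ^ d * u) := by
      rw [← mul_assoc, ← zpow_add₀ hω0]; simp
    rw [this, hmul _ _ he]
    simp [zpow_ne_zero _ hω0]
  have hval : ∀ b : ℤ, Sa s ω (((b : ZMod (Mof s)).val : ℕ) : ℤ) = Sa s ω b := by
    intro b
    apply hinvar
    simp
  have hR : ∀ (k : ℕ) (x : F), x ∈ Rclass s ω {y | (Sa s ω (y.val : ℤ)).ncard = k} ↔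
      x ≠ 0 ∧ ({u : F | u ≠ 0 ∧ trFE s (u ^ (2 ^ s + 1)) = 0 ∧ trFE s (x * u) = 0}).ncard = k := by
    intro k x
    simp only [Rclass, Set.mem_iUnion, cyc, Set.mem_ofPred_eq, exists_prop]
    constructor
    · rintro ⟨i, hi, t, rfl⟩
      refine ⟨zpow_ne_zero _ hω0, ?_⟩
      rw [← hi]
      show (Sa s ω _).ncard = _
      congr 1
      apply hinvar
      rw [Int.cast_add, Int.cast_mul, Int.cast_natCast (Mof s), ZMod.natCast_self, zero_mul,
        add_zero]
    · rintro ⟨hx, hk⟩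
      obtain ⟨n, rfl⟩ := hω x hx
      refine ⟨((n : ℤ) : ZMod (Mof s)), ?_, (n : ℤ) / (Mof s : ℤ), ?_⟩
      · rw [hval, ← hk]
        simp [Sa]
      · rw [ZMod.val_intCast, Int.emod_add_mul_ediv, zpow_natCast]
  have e : ∀ k : ℕ, Rclass s ω {y | (Sa s ω (y.val : ℤ)).ncard = k} =
      {x | x ≠ 0 ∧ ({u : F | u ≠ 0 ∧ trFE s (u ^ (2 ^ s + 1)) = 0 ∧
        trFE s (x * u) = 0}).ncard = k} := fun k => Set.ext (hR k)
  simp only [← e] at k1 k2 k3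
  change psiSum F c (Rclass s ω (T1 s ω)) = _ at k1
  change psiSum F c (Rclass s ω (T1 s ω)) + 2 * psiSum F c (Rclass s ω (T2 s ω)) = _ at k2
  change psiSum F c (Rclass s ω (T1 s ω)) + psiSum F c (Rclass s ω (T2 s ω)) +
    psiSum F c (Rclass s ω (T3 s ω)) = _ at k3
  have hT1 : ((-a : ℤ) : ZMod (Mof s)) ∈ T1 s ω ↔ trFE s (c ^ (2 ^ s + 1)) = 0 := by
    rw [← hinv, T1, Set.mem_ofPred_eq, hval, Sa, zpow_neg]
  rw [hT1, ← hEiff a]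
  have hp : (2 : ℤ) ^ s = 2 * 2 ^ (s - 1) := by
    rw [← pow_succ']; congr 1; omega
  have hp2 : (2 : ℤ) ^ (2 * s) = (2 ^ s) ^ 2 := by rw [mul_comm, pow_mul]
  rw [hp2]
  generalize psiSum F c (Rclass s ω (T1 s ω)) = X at *
  generalize psiSum F c (Rclass s ω (T2 s ω)) = Y at *
  generalize psiSum F c (Rclass s ω (T3 s ω)) = Z at *
  rw [← hcdef]
  refine ⟨?_, ?_, ?_, ?_, ?_, ?_, ?_, ?_⟩
  · intro h; rw [if_pos h] at k1; exact k1
  · intro h; rw [if_neg (fun hh => h ((hEiff a).1 hh))] at k1; linarith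
  · intro h; rw [if_pos h] at k1; rw [if_neg (hQE h)] at k2; rw [hp] at *; nlinarith
  · intro h
    rw [if_pos h] at k2; rw [if_neg (fun h' => hQE h' h)] at k1; rw [hp] at *; nlinarith
  · intro h h'
    rw [if_neg h'] at k2; rw [if_neg (fun hh => h ((hEiff a).1 hh))] at k1; rw [hp] at *; nlinarith
  · intro h; rw [if_pos h] at k1; rw [if_neg (hQE h)] at k2; rw [hp] at *; nlinarith
  · intro h
    rw [if_pos h] at k2; rw [if_neg (fun h' => hQE h' h)] at k1; rw [hp] at *; nlinarith
  · intro h h'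
    rw [if_neg h'] at k2; rw [if_neg (fun hh => h ((hEiff a).1 hh))] at k1; rw [hp] at *; nlinarith
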